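/- First-order bound for product softmax probabilities: fix a global state s ∈ S and a direction ν = (ν_1,…,ν_N) with ν_n ∈ ℝ^{S_n×A_n}. Then the directional derivatives of the product softmax probabilities satisfy Σ_{a∈A} |⟨∇_θ π_θ(a|s), ν⟩| ≤ 2N·‖ν‖₂, and for each fixed a the directional derivative equals π_θ(a|s)·Σ_{n=1}^N ( ν_n(s_n, a_n) − Σ_{a'_n∈A_n} π_{θ_n}(a'_n|s_n)·ν_n(s_n, a'_n) ). -/

import Mathlib

open Finset MeasureTheory
open scoped BigOperators Classical

noncomputable section

/-- Softmax policy with parameter `θ`. -/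
def softmaxPol {S A : Type*} [Fintype A] (θ : S → A → ℝ) (s : S) (a : A) : ℝ :=
  Real.exp (θ s a) / ∑ a' : A, Real.exp (θ s a')

/-- Global product softmax policy. -/
def gPolicy {N : ℕ} {S A : Fin N → Type*} [∀ n, Fintype (A n)]
    (θ : ∀ n, S n → A n → ℝ) (s : ∀ n, S n) (a : ∀ n, A n) : ℝ :=
  ∏ n, softmaxPol (θ n) (s n) (a n)

/-- Global product transition kernel. -/
def gKernel {N : ℕ} {S A : Fin N → Type*} (P : ∀ n, S n → A n → S n → ℝ)
    (s : ∀ n, S n) (a : ∀ n, A n) (s' : ∀ n, S n) : ℝ :=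
  ∏ n, P n (s n) (a n) (s' n)

/-- Distribution of the state at time `t` under kernel `K`, policy `p`,
initial state distribution `ρ`. -/
def stateDist {GS GA : Type*} [Fintype GS] [Fintype GA]
    (K : GS → GA → GS → ℝ) (p : GS → GA → ℝ) (ρ : GS → ℝ) : ℕ → GS → ℝ
  | 0 => ρ
  | t + 1 => fun s' => ∑ s : GS, ∑ a : GA, stateDist K p ρ t s * p s a * K s a s'

/-- Expected reward at time `t`. -/
def expReward {GS GA : Type*} [Fintype GS] [Fintype GA]
    (K : GS → GA → GS → ℝ) (p : GS → GA → ℝ) (R : GS → GA → ℝ) (ρ : GS → ℝ) (t : ℕ) : ℝ :=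
  ∑ s : GS, ∑ a : GA, stateDist K p ρ t s * p s a * R s a

/-- Expected discounted reward with initial state distribution `ρ`:
`V^p(ρ) = E[∑_t γ^t R(s(t),a(t)) | s(0) ∼ ρ]`. -/
def valueD {GS GA : Type*} [Fintype GS] [Fintype GA] (γ : ℝ)
    (K : GS → GA → GS → ℝ) (p : GS → GA → ℝ) (R : GS → GA → ℝ) (ρ : GS → ℝ) : ℝ :=
  ∑' t : ℕ, γ ^ t * expReward K p R ρ t

/-- Point mass at `s0`. -/
def diracD {GS : Type*} (s0 : GS) : GS → ℝ := fun s => if s = s0 then 1 else 0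

/-- State value function `V^p(s)`. -/
def valueV {GS GA : Type*} [Fintype GS] [Fintype GA] (γ : ℝ)
    (K : GS → GA → GS → ℝ) (p : GS → GA → ℝ) (R : GS → GA → ℝ) (s0 : GS) : ℝ :=
  valueD γ K p R (diracD s0)

/-- State-action value function `Q^p(s,a) = R(s,a) + γ E_{s' ∼ K(⬝|s,a)}[V^p(s')]`. -/
def valueQ {GS GA : Type*} [Fintype GS] [Fintype GA] (γ : ℝ)
    (K : GS → GA → GS → ℝ) (p : GS → GA → ℝ) (R : GS → GA → ℝ) (s0 : GS) (a0 : GA) : ℝ :=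
  R s0 a0 + γ * ∑ s' : GS, K s0 a0 s' * valueV γ K p R s'

/-- Discounted state occupancy measure `d_ρ^p(s)`. -/
def occup {GS GA : Type*} [Fintype GS] [Fintype GA] (γ : ℝ)
    (K : GS → GA → GS → ℝ) (p : GS → GA → ℝ) (ρ : GS → ℝ) (s : GS) : ℝ :=
  (1 - γ) * ∑' t : ℕ, γ ^ t * stateDist K p ρ t s

/-- Deterministic policy associated with an action-selection map. -/
def detPol {GS GA : Type*} (f : GS → GA) : GS → GA → ℝ :=
  fun s a => if a = f s then 1 else 0

/-- Squared Euclidean norm of a multi-agent parameter vector. -/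
def sqNorm {N : ℕ} {S A : Fin N → Type*} [∀ n, Fintype (S n)] [∀ n, Fintype (A n)]
    (ν : ∀ n, S n → A n → ℝ) : ℝ :=
  ∑ n, ∑ s, ∑ a, (ν n s a) ^ 2

/-- Euclidean norm of a multi-agent parameter vector. -/
def eucNorm {N : ℕ} {S A : Fin N → Type*} [∀ n, Fintype (S n)] [∀ n, Fintype (A n)]
    (ν : ∀ n, S n → A n → ℝ) : ℝ :=
  Real.sqrt (sqNorm ν)

end

theorem softmaxPol_nonneg' {S A : Type*} [Fintype A] (θ : S → A → ℝ) (s : S) (a : A) :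
    0 ≤ softmaxPol θ s a := by
  unfold softmaxPol
  positivity

theorem softmaxPol_sum' {S A : Type*} [Fintype A] [Nonempty A] (θ : S → A → ℝ) (s : S) :
    ∑ a, softmaxPol θ s a = 1 := by
  unfold softmaxPol
  rw [← Finset.sum_div]
  have : 0 < ∑ a' : A, Real.exp (θ s a') :=
    Finset.sum_pos (fun _ _ => Real.exp_pos _) Finset.univ_nonempty
  exact div_self this.ne'

theorem gPolicy_sum' {N : ℕ} {S A : Fin N → Type*} [∀ n, Fintype (A n)] [∀ n, Nonempty (A n)]
    (θ : ∀ n, S n → A n → ℝ) (s : ∀ n, S n) : ∑ a : ∀ k, A k, gPolicy θ s a = 1 := by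
  unfold gPolicy
  rw [← Fintype.prod_sum (fun n a => softmaxPol (θ n) (s n) a)]
  simp [softmaxPol_sum']

theorem gPolicy_nonneg' {N : ℕ} {S A : Fin N → Type*} [∀ n, Fintype (A n)]
    (θ : ∀ n, S n → A n → ℝ) (s : ∀ n, S n) (a : ∀ n, A n) : 0 ≤ gPolicy θ s a :=
  Finset.prod_nonneg fun _ _ => softmaxPol_nonneg' _ _ _

theorem abs_le_eucNorm' {N : ℕ} {S A : Fin N → Type*} [∀ n, Fintype (S n)]
    [∀ n, Fintype (A n)] (ν : ∀ n, S n → A n → ℝ) (n : Fin N) (s : S n) (a : A n) :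
    |ν n s a| ≤ eucNorm ν := by
  unfold eucNorm sqNorm
  apply Real.abs_le_sqrt
  calc (ν n s a) ^ 2 ≤ ∑ a, (ν n s a) ^ 2 :=
        Finset.single_le_sum (f := fun a => (ν n s a) ^ 2) (fun _ _ => sq_nonneg _)
          (Finset.mem_univ a)
    _ ≤ ∑ s, ∑ a, (ν n s a) ^ 2 :=
        Finset.single_le_sum (f := fun s => ∑ a, (ν n s a) ^ 2)
          (fun _ _ => Finset.sum_nonneg fun _ _ => sq_nonneg _) (Finset.mem_univ s)
    _ ≤ _ :=
        Finset.single_le_sum (f := fun n => ∑ s, ∑ a, (ν n s a) ^ 2)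
          (fun _ _ => Finset.sum_nonneg fun _ _ => Finset.sum_nonneg fun _ _ => sq_nonneg _)
          (Finset.mem_univ n)

theorem gPolicy_eq_exp' {N : ℕ} {S A : Fin N → Type*} [∀ n, Fintype (A n)]
    [∀ n, Nonempty (A n)] (θ : ∀ n, S n → A n → ℝ) (s : ∀ n, S n) (a : ∀ n, A n) :
    gPolicy θ s a =
      Real.exp (∑ n, (θ n (s n) (a n) - Real.log (∑ a', Real.exp (θ n (s n) a')))) := by
  unfold gPolicy softmaxPol
  rw [Real.exp_sum]
  refine Finset.prod_congr rfl fun n _ => ?_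
  have : 0 < ∑ a' : A n, Real.exp (θ n (s n) a') :=
    Finset.sum_pos (fun _ _ => Real.exp_pos _) Finset.univ_nonempty
  rw [Real.exp_sub, Real.exp_log this]

theorem gPolicy_fderiv' {N : ℕ} {S A : Fin N → Type*} [∀ n, Fintype (S n)]
    [∀ n, Fintype (A n)] [∀ n, Nonempty (A n)]
    (θ ν : ∀ n, S n → A n → ℝ) (s : ∀ n, S n) (a : ∀ n, A n) :
    fderiv ℝ (fun θ' : ∀ n, S n → A n → ℝ => gPolicy θ' s a) θ ν
        = gPolicy θ s a *
            ∑ n, (ν n (s n) (a n) -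
              ∑ a' : A n, softmaxPol (θ n) (s n) a' * ν n (s n) a') := by
  have hpos : ∀ (θ : ∀ n, S n → A n → ℝ) n, 0 < ∑ a' : A n, Real.exp (θ n (s n) a') :=
    fun θ n => Finset.sum_pos (fun _ _ => Real.exp_pos _) Finset.univ_nonempty
  let pr : ∀ n, A n → ((∀ n, S n → A n → ℝ) →L[ℝ] ℝ) := fun n b =>
    (ContinuousLinearMap.proj (R := ℝ) (φ := fun _ : A n => ℝ) b).comp
      ((ContinuousLinearMap.proj (R := ℝ) (φ := fun _ : S n => A n → ℝ) (s n)).comp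
        (ContinuousLinearMap.proj (R := ℝ) (φ := fun n : Fin N => S n → A n → ℝ) n))
  have hpr : ∀ n b, HasFDerivAt (fun θ' : ∀ n, S n → A n → ℝ => θ' n (s n) b) (pr n b) θ :=
    fun n b => (pr n b).hasFDerivAt
  have h := (HasFDerivAt.fun_sum (u := Finset.univ) fun n _ =>
    (hpr n (a n)).sub ((HasFDerivAt.fun_sum (u := Finset.univ) fun b _ =>
      (hpr n b).exp).log (hpos θ n).ne')).exp
  have h2 := h.congr_of_eventuallyEq (f₁ := fun θ' : ∀ n, S n → A n → ℝ => gPolicy θ' s a)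
    (Filter.Eventually.of_forall fun θ' => by
      simp [gPolicy_eq_exp'])
  rw [h2.fderiv, gPolicy_eq_exp']
  simp only [ContinuousLinearMap.smul_apply, ContinuousLinearMap.sum_apply,
    ContinuousLinearMap.sub_apply, smul_eq_mul]
  congr 1
  refine Finset.sum_congr rfl fun n _ => ?_
  have e : ∀ b, pr n b ν = ν n (s n) b := fun b => rfl
  simp only [e, softmaxPol, Finset.mul_sum]
  congr 1
  refine Finset.sum_congr rfl fun b _ => ?_
  ring

/-- First-order bound for product softmax probabilities: the
directional derivative of `θ ↦ π_θ(a|s)` in direction `ν` equals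
`π_θ(a|s)·Σ_n (ν_n(s_n,a_n) − Σ_{a'} π_{θ_n}(a'|s_n) ν_n(s_n,a'))`, and the sum of its
absolute values over all global actions is at most `2N‖ν‖₂`. -/
theorem softmax_first_order_bound
    {N : ℕ} (hN : 1 ≤ N)
    {S A : Fin N → Type*}
    [∀ n, Fintype (S n)] [∀ n, Nonempty (S n)]
    [∀ n, Fintype (A n)] [∀ n, Nonempty (A n)]
    (θ ν : ∀ n, S n → A n → ℝ) (s : ∀ k, S k) :
    (∀ a : ∀ k, A k,
      fderiv ℝ (fun θ' : ∀ n, S n → A n → ℝ => gPolicy θ' s a) θ ν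
        = gPolicy θ s a *
            ∑ n, (ν n (s n) (a n) -
              ∑ a' : A n, softmaxPol (θ n) (s n) a' * ν n (s n) a')) ∧
    ∑ a : ∀ k, A k,
        |fderiv ℝ (fun θ' : ∀ n, S n → A n → ℝ => gPolicy θ' s a) θ ν|
      ≤ 2 * (N : ℝ) * eucNorm ν := by
  refine ⟨fun a => gPolicy_fderiv' θ ν s a, ?_⟩
  have key : ∀ a : ∀ k, A k,
      |fderiv ℝ (fun θ' : ∀ n, S n → A n → ℝ => gPolicy θ' s a) θ ν|
        ≤ gPolicy θ s a * (2 * (N : ℝ) * eucNorm ν) := by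
    intro a
    rw [gPolicy_fderiv', abs_mul, abs_of_nonneg (gPolicy_nonneg' θ s a)]
    refine mul_le_mul_of_nonneg_left ?_ (gPolicy_nonneg' θ s a)
    calc _ ≤ ∑ n, |ν n (s n) (a n) - ∑ a' : A n, softmaxPol (θ n) (s n) a' * ν n (s n) a'| :=
          Finset.abs_sum_le_sum_abs _ _
      _ ≤ ∑ _n : Fin N, 2 * eucNorm ν := by
          refine Finset.sum_le_sum fun n _ => ?_
          have h1 := abs_le_eucNorm' ν n (s n) (a n)
          have h2 : |∑ a' : A n, softmaxPol (θ n) (s n) a' * ν n (s n) a'| ≤ eucNorm ν := by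
            calc _ ≤ ∑ a' : A n, |softmaxPol (θ n) (s n) a' * ν n (s n) a'| :=
                  Finset.abs_sum_le_sum_abs _ _
              _ ≤ ∑ a' : A n, softmaxPol (θ n) (s n) a' * eucNorm ν := by
                  refine Finset.sum_le_sum fun b _ => ?_
                  rw [abs_mul, abs_of_nonneg (softmaxPol_nonneg' _ _ _)]
                  exact mul_le_mul_of_nonneg_left (abs_le_eucNorm' ν n (s n) b)
                    (softmaxPol_nonneg' _ _ _)
              _ = eucNorm ν := by rw [← Finset.sum_mul, softmaxPol_sum', one_mul]
          have h3 := abs_sub (ν n (s n) (a n))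
            (∑ a' : A n, softmaxPol (θ n) (s n) a' * ν n (s n) a')
          linarith
      _ = 2 * (N : ℝ) * eucNorm ν := by
          simp
          ring
  calc _ ≤ ∑ a : ∀ k, A k, gPolicy θ s a * (2 * (N : ℝ) * eucNorm ν) :=
        Finset.sum_le_sum fun a _ => key a
    _ = _ := by rw [← Finset.sum_mul, gPolicy_sum', one_mul]
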